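/- arXiv:2208.03716 — 4 statements merged into one kernel-verified Lean document; each statement's English description precedes it below -/
import Mathlib

section
/- Let k be a positive integer, f : Fin k → Fin k → Fin k a binary operation, and M : Matrix (Fin k) (Fin k × Fin k) ℝ its structure matrix, M i' (i,j) = if i' = f i j then 1 else 0. Then the following are equivalent: (A) M satisfies (i) M * D = I_k, where D : Matrix (Fin k × Fin k) (Fin k) ℝ has D (i,j) l = if i = l ∧ j = l then 1 else 0; (ii) M * W = M, where W : Matrix (Fin k × Fin k) (Fin k × Fin k) ℝ is the swap permutation matrix W (a,b) (c,d) = if a = d ∧ b = c then 1 else 0; (iii) M * (M ⊗ I_k) = (M * (I_k ⊗ M)) reindexed along the natural associativity bijection ((Fin k × Fin k) × Fin k) ≃ (Fin k × (Fin k × Fin k)), where (M ⊗ I_k) (a,b) ((i,j),l) = M a (i,j) * (if b = l then 1 else 0) and (I_k ⊗ M) (a,b) (i,(j,l)) = (if a = i then 1 else 0) * M b (j,l); (iv) there exists i : Fin k such that M j' (i,j) = if j' = j then 1 else 0 for all j, j'. (B) f satisfies: f x x = x for all x; f x y = f y x for all x, y; f (f x y) z = f x (f y z) for all x, y, z; and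 there exists z : Fin k with f w z = w for all w. Condition (B) says (Fin k, f) is a lattice (with f as the join operation). -/
/-!
Each of the matrices multiplying `M` on the right has standard basis vectors as columns, so
every column of each product is again a column of `M`, that is, a vector `e_{f i j}`
(`mul_apply_of_col`). Since `x ↦ e_x` is injective (`forall_ite_eq_iff`), conditions (i)–(iii)
are column by column the identities `f l l = l`, `f d c = f c d` and
`f (f i j) l = f i (f j l)`. Condition (iv) says that `f` has a left identity, which under
commutativity is the same as a right identity.
-/

/-- If column `q` of `B` is the basis vector `e_r`, then column `q` of `M * B` is column `r`
of `M`. -/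
theorem mul_apply_of_col {m n o : Type*} [Fintype n] [DecidableEq n]
    (M : Matrix m n ℝ) (B : Matrix n o ℝ) (q : o) (r : n)
    (h : ∀ p, B p q = if p = r then 1 else 0) (a : m) : (M * B) a q = M a r := by
  simp [Matrix.mul_apply, h]

/-- The basis vectors `e_x` and `e_y` agree only if `x = y`. -/
theorem forall_ite_eq_iff {n : Type*} [DecidableEq n] (x y : n) :
    (∀ a, (if a = x then (1 : ℝ) else 0) = if a = y then 1 else 0) ↔ x = y := by
  refine ⟨fun h => ?_, fun h a => by rw [h]⟩
  by_contra hne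
  simpa [hne] using h x

/-- Matrix criteria for a finite set with a binary operator to be a lattice: conditions
(i)–(iv) on the structure matrix `M` of `f` hold if and only if `f` is idempotent,
commutative, associative, and has an identity element. -/
theorem stmt4 (k : ℕ) (hk : 0 < k) (f : Fin k → Fin k → Fin k)
    (M : Matrix (Fin k) (Fin k × Fin k) ℝ)
    (hM : ∀ (i' : Fin k) (p : Fin k × Fin k),
      M i' p = if i' = f p.1 p.2 then (1 : ℝ) else 0) :
    ((M * (Matrix.of fun (p : Fin k × Fin k) (l : Fin k) =>
          if p.1 = l ∧ p.2 = l then (1 : ℝ) else 0) = (1 : Matrix (Fin k) (Fin k) ℝ)) ∧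
     (M * (Matrix.of fun (p q : Fin k × Fin k) =>
          if p.1 = q.2 ∧ p.2 = q.1 then (1 : ℝ) else 0) = M) ∧
     (∀ (a i j l : Fin k),
        (M * (Matrix.of fun (ab : Fin k × Fin k) (q : (Fin k × Fin k) × Fin k) =>
            M ab.1 q.1 * (if ab.2 = q.2 then (1 : ℝ) else 0))) a ((i, j), l)
        = (M * (Matrix.of fun (ab : Fin k × Fin k) (q : Fin k × (Fin k × Fin k)) =>
            (if ab.1 = q.1 then (1 : ℝ) else 0) * M ab.2 q.2)) a (i, (j, l))) ∧
     (∃ i : Fin k, ∀ j j' : Fin k,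
        M j' (i, j) = if j' = j then (1 : ℝ) else 0))
    ↔
    ((∀ x, f x x = x) ∧ (∀ x y, f x y = f y x) ∧
     (∀ x y z, f (f x y) z = f x (f y z)) ∧
     (∃ z : Fin k, ∀ w, f w z = w)) := by
  have h1 : (M * (Matrix.of fun (p : Fin k × Fin k) (l : Fin k) =>
      if p.1 = l ∧ p.2 = l then (1 : ℝ) else 0) = (1 : Matrix (Fin k) (Fin k) ℝ)) ↔
      ∀ x, f x x = x := by
    rw [← Matrix.ext_iff, forall_comm]
    refine forall_congr' fun l => ?_
    rw [← forall_ite_eq_iff (f l l) l]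
    refine forall_congr' fun a => ?_
    rw [mul_apply_of_col M _ l (l, l) (by simp [Prod.ext_iff]), hM, Matrix.one_apply]
  have h2 : (M * (Matrix.of fun (p q : Fin k × Fin k) =>
      if p.1 = q.2 ∧ p.2 = q.1 then (1 : ℝ) else 0) = M) ↔ ∀ x y, f x y = f y x := by
    rw [← Matrix.ext_iff, forall_comm, Prod.forall, forall_comm]
    refine forall_congr' fun d => forall_congr' fun c => ?_
    rw [← forall_ite_eq_iff (f d c) (f c d)]
    refine forall_congr' fun a => ?_
    rw [mul_apply_of_col M _ (c, d) (d, c) (by simp [Prod.ext_iff]), hM, hM]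
  have h3 : (∀ (a i j l : Fin k),
      (M * (Matrix.of fun (ab : Fin k × Fin k) (q : (Fin k × Fin k) × Fin k) =>
          M ab.1 q.1 * (if ab.2 = q.2 then (1 : ℝ) else 0))) a ((i, j), l)
      = (M * (Matrix.of fun (ab : Fin k × Fin k) (q : Fin k × (Fin k × Fin k)) =>
          (if ab.1 = q.1 then (1 : ℝ) else 0) * M ab.2 q.2)) a (i, (j, l))) ↔
      ∀ x y z, f (f x y) z = f x (f y z) := by
    have key : ∀ a i j l : Fin k,
        ((M * (Matrix.of fun (ab : Fin k × Fin k) (q : (Fin k × Fin k) × Fin k) =>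
          M ab.1 q.1 * (if ab.2 = q.2 then (1 : ℝ) else 0))) a ((i, j), l)
        = (M * (Matrix.of fun (ab : Fin k × Fin k) (q : Fin k × (Fin k × Fin k)) =>
          (if ab.1 = q.1 then (1 : ℝ) else 0) * M ab.2 q.2)) a (i, (j, l))) ↔
        ((if a = f (f i j) l then (1 : ℝ) else 0) = if a = f i (f j l) then 1 else 0) := by
      intro a i j l
      rw [mul_apply_of_col M _ ((i, j), l) (f i j, l)
          (by rintro ⟨b, c⟩; simp [hM, Prod.ext_iff, ite_and, -mul_ite, ite_mul]),
        mul_apply_of_col M _ (i, (j, l)) (i, f j l)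
          (by rintro ⟨b, c⟩; simp [hM, Prod.ext_iff, ite_and, -mul_ite, ite_mul]), hM, hM]
    simp only [key]
    exact ⟨fun h x y z => (forall_ite_eq_iff _ _).1 fun a => h a x y z,
      fun h a x y z => (forall_ite_eq_iff _ _).2 (h x y z) a⟩
  have h4 : (∃ i : Fin k, ∀ j j' : Fin k, M j' (i, j) = if j' = j then (1 : ℝ) else 0) ↔
      ∃ z : Fin k, ∀ w, f z w = w := by
    simp only [hM, forall_ite_eq_iff]
  rw [h1, h2, h3, h4]
  refine and_congr_right fun _ => and_congr_right fun hc => and_congr_right fun _ => ?_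
  exact exists_congr fun z => forall_congr' fun w => by rw [hc z w]
end

section
/- Let k be a positive integer, f : Fin k → Fin k → Fin k a binary operation, and M : Matrix (Fin k) (Fin k × Fin k) ℝ its structure matrix, M i' (i,j) = if i' = f i j then 1 else 0. Define M ⊗ I_k : Matrix (Fin k × Fin k) ((Fin k × Fin k) × Fin k) ℝ by (M ⊗ I_k) (a,b) ((i,j),l) = M a (i,j) * (if b = l then 1 else 0), and I_k ⊗ M : Matrix (Fin k × Fin k) (Fin k × (Fin k × Fin k)) ℝ by (I_k ⊗ M) (a,b) (i,(j,l)) = (if a = i then 1 else 0) * M b (j,l). Then (M * (M ⊗ I_k)) ((i,j),l) entrywise equals (M * (I_k ⊗ M)) (i,(j,l)) for all i, j, l (i.e., M² = M(I_k ⊗ M) in semi-tensor product notation) if and only if f is associative, i.e., f (f x y) z = f x (f y z) for all x, y, z : Fin k. -/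
/-!
Every column of `M`, `M ⊗ I_k` and `I_k ⊗ M` is a standard basis vector, so both products collapse:
column `((x, y), z)` of `M (M ⊗ I_k)` is the basis vector at `f (f x y) z`, and column
`(x, (y, z))` of `M (I_k ⊗ M)` is the one at `f x (f y z)`. Two basis vectors agree exactly when
their indices do, which is associativity of `f`.
-/

/-- `M² = M (I_k ⊗ M)` (entrywise, along the associativity bijection of index types)
if and only if the binary operation `f` with structure matrix `M` is associative. -/
theorem stmt6 (k : ℕ) (hk : 0 < k) (f : Fin k → Fin k → Fin k)
    (M : Matrix (Fin k) (Fin k × Fin k) ℝ)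
    (hM : ∀ (i' : Fin k) (p : Fin k × Fin k),
      M i' p = if i' = f p.1 p.2 then (1 : ℝ) else 0) :
    (∀ (a i j l : Fin k),
      (M * (Matrix.of fun (ab : Fin k × Fin k) (q : (Fin k × Fin k) × Fin k) =>
          M ab.1 q.1 * (if ab.2 = q.2 then (1 : ℝ) else 0))) a ((i, j), l)
      = (M * (Matrix.of fun (ab : Fin k × Fin k) (q : Fin k × (Fin k × Fin k)) =>
          (if ab.1 = q.1 then (1 : ℝ) else 0) * M ab.2 q.2)) a (i, (j, l)))
    ↔ ∀ x y z : Fin k, f (f x y) z = f x (f y z) := by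
  have hL : ∀ a i j l : Fin k,
      (M * (Matrix.of fun (ab : Fin k × Fin k) (q : (Fin k × Fin k) × Fin k) =>
          M ab.1 q.1 * (if ab.2 = q.2 then (1 : ℝ) else 0))) a ((i, j), l)
      = if a = f (f i j) l then 1 else 0 := by
    intro a i j l
    rw [Matrix.mul_apply, Finset.sum_eq_single (f i j, l)]
    · simp [hM]
    · rintro ⟨b, c⟩ - hne
      have h : ¬(b = f i j ∧ c = l) := fun h => hne (by rw [h.1, h.2])
      simp only [Matrix.of_apply, hM]
      split_ifs <;> simp_all
    · simp
  have hR : ∀ a i j l : Fin k,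
      (M * (Matrix.of fun (ab : Fin k × Fin k) (q : Fin k × (Fin k × Fin k)) =>
          (if ab.1 = q.1 then (1 : ℝ) else 0) * M ab.2 q.2)) a (i, (j, l))
      = if a = f i (f j l) then 1 else 0 := by
    intro a i j l
    rw [Matrix.mul_apply, Finset.sum_eq_single (i, f j l)]
    · simp [hM]
    · rintro ⟨b, c⟩ - hne
      have h : ¬(b = i ∧ c = f j l) := fun h => hne (by rw [h.1, h.2])
      simp only [Matrix.of_apply, hM]
      split_ifs <;> simp_all
    · simp
  simp only [hL, hR]
  constructor
  · intro h x y z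
    by_contra hne
    have := h (f (f x y) z) x y z
    simp [hne] at this
  · intro h a i j l
    rw [h]
end

section
/- Let n be a positive integer and f : (Fin n → Bool) → Bool, where Bool carries its standard lattice structure (false < true, ⊔ = or, ⊓ = and) and (Fin n → Bool) → Bool carries the pointwise lattice structure. Let P be the set of coordinate projections P = {g | ∃ i : Fin n, g = fun x => x i}. Then f belongs to the lattice closure of P (Mathlib's latticeClosure P) if and only if f is monotone, f (fun _ => false) = false, and f (fun _ => true) = true. That is, the class of n-ary Boolean functions generated by disjunction and conjunction (without constants) is exactly the class of monotonic and reproducing Boolean functions. -/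
/-!
Monotone reproducing functions form a sublattice containing the projections, which gives one
direction. Conversely, a monotone reproducing `f` equals its disjunctive normal form
`⋁_{f y = 1} ⋀_{y i = 1} x i`: the inner conjunction is the indicator of `y ≤ x`
(`exists_mem_latticeClosure_indicator`), and monotonicity says that `f x = 1` iff some `y ≤ x`
has `f y = 1`. Constants are not available, so the conjunctions and the disjunction must be
nonempty: `f 0 = 0` gives the former and `f 1 = 1` the latter.
-/

/-- The indicator of the up-set of a nonzero point `y` is a nonempty conjunction of variables. -/
lemma exists_mem_latticeClosure_indicator {n : ℕ} (y : Fin n → Bool)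
    (hy : y ≠ fun _ => false) :
    ∃ g ∈ latticeClosure {g : (Fin n → Bool) → Bool | ∃ i : Fin n, g = fun x => x i},
      ∀ x, g x = true ↔ y ≤ x := by
  have hne : (Finset.univ.filter fun i => y i = true).Nonempty := by
    obtain ⟨i, hi⟩ := Function.ne_iff.mp hy
    exact ⟨i, by simpa using hi⟩
  refine ⟨(Finset.univ.filter fun i => y i = true).inf' hne fun i x => x i,
    isSublattice_latticeClosure.infClosed.finsetInf'_mem hne
      fun i _ => subset_latticeClosure ⟨i, rfl⟩, fun x => ?_⟩
  have hle : ∀ b : Bool, b = true ↔ true ≤ b := by decide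
  rw [Finset.inf'_apply, hle (Finset.inf' _ _ _), Finset.le_inf'_iff]
  simp only [Finset.mem_filter, Finset.mem_univ, true_and, ← hle]
  -- The order on `Bool` is defined as implication.
  exact Iff.rfl

/-- Post's characterization: an `n`-ary Boolean function is generated by `∨` and `∧`
(applied to the variables) if and only if it is monotone and reproducing. -/
theorem stmt15 (n : ℕ) (hn : 0 < n) (f : (Fin n → Bool) → Bool) :
    f ∈ latticeClosure
      {g : (Fin n → Bool) → Bool | ∃ i : Fin n, g = fun x => x i}
    ↔ (Monotone f ∧ f (fun _ => false) = false ∧ f (fun _ => true) = true) := by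
  constructor
  · intro hf
    induction hf using latticeClosure_sup_inf_induction with
    | mem g hg =>
      obtain ⟨i, rfl⟩ := hg
      exact ⟨fun x y h => h i, rfl, rfl⟩
    | sup a _ b _ ha hb =>
      exact ⟨ha.1.sup hb.1, by simp [ha.2.1, hb.2.1], by simp [ha.2.2, hb.2.2]⟩
    | inf a _ b _ ha hb =>
      exact ⟨ha.1.inf hb.1, by simp [ha.2.1, hb.2.1], by simp [ha.2.2, hb.2.2]⟩
  · rintro ⟨hmono, h0, h1⟩
    have key : ∀ y, ∃ g : (Fin n → Bool) → Bool, f y = true →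
        g ∈ latticeClosure {g : (Fin n → Bool) → Bool | ∃ i : Fin n, g = fun x => x i} ∧
        ∀ x, g x = true ↔ y ≤ x := by
      intro y
      by_cases hy : f y = true
      · obtain ⟨g, hg⟩ := exists_mem_latticeClosure_indicator y
          (by rintro rfl; simp [h0] at hy)
        exact ⟨g, fun _ => hg⟩
      · exact ⟨f, fun h => absurd h hy⟩
    choose g hg using key
    have hne : (Finset.univ.filter fun y => f y = true).Nonempty := ⟨fun _ => true, by simpa⟩
    have hfg : f = (Finset.univ.filter fun y => f y = true).sup' hne g := by
      funext x
      rw [Bool.eq_iff_iff, Finset.sup'_apply]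
      have hlt : ∀ b : Bool, b = true ↔ false < b := by decide
      rw [hlt (Finset.sup' _ _ _), Finset.lt_sup'_iff]
      simp only [Finset.mem_filter, Finset.mem_univ, true_and, ← hlt]
      constructor
      · exact fun hx => ⟨x, hx, ((hg x hx).2 x).2 le_rfl⟩
      · rintro ⟨y, hy, hyx⟩
        exact top_le_iff.mp (hy.symm.le.trans (hmono (((hg y hy).2 x).1 hyx)))
    rw [hfg]
    exact isSublattice_latticeClosure.supClosed.finsetSup'_mem hne
      fun y hy => (hg y (by simpa using hy)).1
end

section
/- Let L be a finite bounded lattice, i.e., a type with instances [Lattice L], [BoundedOrder L], [Fintype L], [DecidableEq L], let n be a positive integer, and let f : (Fin n → L) → L be monotone (with respect to the pointwise order on Fin n → L). For a, b : L define m_{a,b} : L → L by m_{a,b}(x) = b if a ≤ x and m_{a,b}(x) = ⊥ otherwise. Then for every x : Fin n → L, f x = Finset.univ.sup (fun a : Fin n → L => Finset.univ.inf' (Finset.univ_nonempty) (fun i : Fin n => if a i ≤ x i then f a else ⊥)); that is, f(x) = ⋁_{a ∈ L^n} ⋀_{i=1}^{n} m_{a_i, f(a)}(x_i), where the supremum ranges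 over all n-tuples a and the infimum over all coordinates i. -/
open Classical

/-- Canonical representation of a monotone function over a finite bounded lattice by the
basic operators: `f(x) = ⋁_{a ∈ Lⁿ} ⋀_i m_{aᵢ, f(a)}(xᵢ)`. -/
theorem stmt16 (L : Type*) [Lattice L] [BoundedOrder L] [Fintype L] [DecidableEq L]
    (n : ℕ) (hn : 0 < n) (f : (Fin n → L) → L) (hf : Monotone f) :
    ∀ x : Fin n → L,
      f x = Finset.univ.sup (fun a : Fin n → L =>
        Finset.univ.inf' ⟨(⟨0, hn⟩ : Fin n), Finset.mem_univ _⟩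
          (fun i : Fin n => if a i ≤ x i then f a else ⊥)) := by
  intro x
  apply le_antisymm
  · -- The term `a = x` of the supremum is already `f x`.
    refine le_trans ?_ (Finset.le_sup (Finset.mem_univ x))
    refine Finset.le_inf' _ _ fun i _ => ?_
    rw [if_pos le_rfl]
  · -- Each term is at most `f x`: by monotonicity if `a ≤ x`, and otherwise because a
    -- coordinate with `¬ a i ≤ x i` makes the infimum `⊥`.
    refine Finset.sup_le fun a _ => ?_
    by_cases h : a ≤ x
    · refine (Finset.inf'_le _ (Finset.mem_univ (⟨0, hn⟩ : Fin n))).trans ?_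
      rw [if_pos (h _)]
      exact hf h
    · obtain ⟨i, hi⟩ := not_forall.mp h
      refine (Finset.inf'_le _ (Finset.mem_univ i)).trans ?_
      rw [if_neg hi]
      exact bot_le
end
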